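/- (Noise tolerance of the truncated Catoni's M-estimator composed with softmax cross-entropy.) Let ψ(z, i) = Φ^T_σ(ℓ(z, i)) where ℓ is the softmax cross-entropy loss, and set C = k · log(1 + σ + σ²/2). Suppose Δ := R_ψ(f*) − R_ψ(f) ≤ 0, that C − kΔ > 0, and that the symmetric noise rate satisfies 0 ≤ η < ((1−k)·Δ)/(C − kΔ). Then R^η_ψ(f*) ≤ R^η_ψ(f). -/

import Mathlib

open MeasureTheory Finset

/-- The softmax cross-entropy loss: ℓ(z, i) = log(Σ_j exp(z_j)) − z_i. -/
noncomputable def ceLoss {k : ℕ} (z : Fin k → ℝ) (i : Fin k) : ℝ :=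
  Real.log (∑ j, Real.exp (z j)) - z i

/-- The truncated Catoni's M-estimator with truncation threshold σ. -/
noncomputable def truncCatoni (σ L : ℝ) : ℝ :=
  if L ≤ σ then Real.log (1 + L + L ^ 2 / 2) else Real.log (1 + σ + σ ^ 2 / 2)

/-- The loss ψ: the truncated Catoni's M-estimator composed with softmax
cross-entropy. -/
noncomputable def truncCatoniCE (σ : ℝ) {k : ℕ} (z : Fin k → ℝ) (i : Fin k) : ℝ :=
  truncCatoni σ (ceLoss z i)

/-- The clean ψ-risk. -/
noncomputable def cleanRisk {X : Type*} [MeasurableSpace X] {k : ℕ}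
    (μ : Measure (X × Fin k)) (ψ : (Fin k → ℝ) → Fin k → ℝ) (g : X → Fin k → ℝ) : ℝ :=
  ∫ p, ψ (g p.1) p.2 ∂μ

/-- The ψ-risk under symmetric (uniform) label noise with noise rate η. -/
noncomputable def noisyRisk {X : Type*} [MeasurableSpace X] {k : ℕ}
    (μ : Measure (X × Fin k)) (ψ : (Fin k → ℝ) → Fin k → ℝ) (g : X → Fin k → ℝ)
    (η : ℝ) : ℝ :=
  ∫ p, ((1 - η) * ψ (g p.1) p.2
      + (η / ((k : ℝ) - 1)) * ∑ i ∈ Finset.univ.erase p.2, ψ (g p.1) i) ∂μ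

/-!
Write `c = η / (k - 1)`. Adding and subtracting the true label in the noise term turns the noisy
risk into `(1 - η - c) * R(g) + c * T(g)`, where `R` is the clean risk and `T` is the expected sum
of the losses over all labels. If `T` favours `f` by at most `C`, then
`(k - 1) * (R^η(f*) - R^η(f)) ≤ (k - 1) * Δ + η * (C - k * Δ)`, whose right-hand side is nonpositive
precisely up to the stated noise threshold. For the truncated Catoni loss, whose values lie in
`[0, log (1 + σ + σ² / 2)]`, one may take `C = k * log (1 + σ + σ² / 2)`; for a symmetric loss,
whose sum over the labels is constant, `C = 0`.
-/

section BoundedLoss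

theorem ceLoss_nonneg {k : ℕ} (z : Fin k → ℝ) (i : Fin k) : 0 ≤ ceLoss z i := by
  have exp_le_sum : Real.exp (z i) ≤ ∑ j, Real.exp (z j) :=
    single_le_sum (f := fun j => Real.exp (z j)) (fun j _ => (Real.exp_pos _).le) (mem_univ i)
  exact sub_nonneg.2 ((Real.le_log_iff_exp_le ((Real.exp_pos _).trans_le exp_le_sum)).2 exp_le_sum)

variable {σ : ℝ}

theorem truncCatoni_nonneg {L : ℝ} (hσ : 0 ≤ σ) (hL : 0 ≤ L) : 0 ≤ truncCatoni σ L := by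
  unfold truncCatoni
  split_ifs <;> exact Real.log_nonneg (by nlinarith)

theorem truncCatoni_le {L : ℝ} (hL : -1 ≤ L) :
    truncCatoni σ L ≤ Real.log (1 + σ + σ ^ 2 / 2) := by
  unfold truncCatoni
  split_ifs with hLσ
  · exact Real.log_le_log (by nlinarith) (by nlinarith)
  · exact le_rfl

theorem truncCatoniCE_nonneg {k : ℕ} (hσ : 0 ≤ σ) (z : Fin k → ℝ) (i : Fin k) :
    0 ≤ truncCatoniCE σ z i :=
  truncCatoni_nonneg hσ (ceLoss_nonneg z i)

theorem truncCatoniCE_le {k : ℕ} (z : Fin k → ℝ) (i : Fin k) :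
    truncCatoniCE σ z i ≤ Real.log (1 + σ + σ ^ 2 / 2) :=
  truncCatoni_le (by linarith [ceLoss_nonneg z i])

theorem sum_truncCatoniCE_sub_le {k : ℕ} (hσ : 0 ≤ σ) (z w : Fin k → ℝ) :
    ∑ i, (truncCatoniCE σ z i - truncCatoniCE σ w i) ≤ k * Real.log (1 + σ + σ ^ 2 / 2) :=
  calc ∑ i, (truncCatoniCE σ z i - truncCatoniCE σ w i)
      ≤ ∑ _i : Fin k, Real.log (1 + σ + σ ^ 2 / 2) :=
        sum_le_sum fun i _ =>
          (sub_le_self _ (truncCatoniCE_nonneg hσ w i)).trans (truncCatoniCE_le z i)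
    _ = k * Real.log (1 + σ + σ ^ 2 / 2) := by
        rw [sum_const, card_univ, Fintype.card_fin, nsmul_eq_mul]

end BoundedLoss

theorem integrable_apply_of_forall_integrable {α ι E : Type*} [MeasurableSpace α]
    [MeasurableSpace ι] [MeasurableSingletonClass ι] [Finite ι] [NormedAddCommGroup E]
    {μ : Measure α} {F : α → ι → E} {y : α → ι} (hy : Measurable y)
    (hF : ∀ i, Integrable (fun a => F a i) μ) : Integrable (fun a => F a (y a)) μ := by
  classical
  cases nonempty_fintype ι
  have integrable_sum : Integrable (fun a => ∑ i, (y ⁻¹' {i}).indicator (fun a => F a i) a) μ :=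
    integrable_finsetSum _ fun i _ => (hF i).indicator (hy (measurableSet_singleton i))
  refine integrable_sum.congr (.of_forall fun a => ?_)
  simp [Set.indicator_apply]

section Risk

variable {X : Type*} [MeasurableSpace X] {k : ℕ}

/-- The total ψ-risk: the expected sum of the losses over all labels. It is the part of the noisy
risk that does not depend on the true label; it is constant in `g` when the loss is symmetric. -/
noncomputable def totalRisk (μ : Measure (X × Fin k)) (ψ : (Fin k → ℝ) → Fin k → ℝ)
    (g : X → Fin k → ℝ) : ℝ :=
  ∫ p, ∑ i, ψ (g p.1) i ∂μ

variable {μ : Measure (X × Fin k)} {ψ : (Fin k → ℝ) → Fin k → ℝ} {f fstar g : X → Fin k → ℝ}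
  {C Δ η : ℝ}

theorem noisyRisk_eq_cleanRisk_add_totalRisk (hg : ∀ i, Integrable (fun p => ψ (g p.1) i) μ) :
    noisyRisk μ ψ g η =
      (1 - η - η / ((k : ℝ) - 1)) * cleanRisk μ ψ g + η / ((k : ℝ) - 1) * totalRisk μ ψ g := by
  have integrable_clean : Integrable (fun p => ψ (g p.1) p.2) μ :=
    integrable_apply_of_forall_integrable measurable_snd hg
  have integrable_total : Integrable (fun p => ∑ i, ψ (g p.1) i) μ :=
    integrable_finsetSum _ fun i _ => hg i
  unfold noisyRisk cleanRisk totalRisk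
  rw [← integral_const_mul, ← integral_const_mul,
    ← integral_add (integrable_clean.const_mul _) (integrable_total.const_mul _)]
  congr 1 with p
  rw [← add_sum_erase univ (ψ (g p.1)) (mem_univ p.2)]
  ring

theorem totalRisk_sub_le [IsProbabilityMeasure μ]
    (hf : ∀ i, Integrable (fun p => ψ (f p.1) i) μ)
    (hfstar : ∀ i, Integrable (fun p => ψ (fstar p.1) i) μ)
    (hC : ∀ x, ∑ i, (ψ (fstar x) i - ψ (f x) i) ≤ C) :
    totalRisk μ ψ fstar - totalRisk μ ψ f ≤ C := by
  have integrable_gap : Integrable (fun p => ∑ i, (ψ (fstar p.1) i - ψ (f p.1) i)) μ :=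
    integrable_finsetSum _ fun i _ => (hfstar i).sub (hf i)
  calc totalRisk μ ψ fstar - totalRisk μ ψ f
      = ∫ p, ∑ i, (ψ (fstar p.1) i - ψ (f p.1) i) ∂μ := by
        simp only [sum_sub_distrib]
        exact (integral_sub (integrable_finsetSum _ fun i _ => hfstar i)
          (integrable_finsetSum _ fun i _ => hf i)).symm
    _ ≤ ∫ _p, C ∂μ := integral_mono integrable_gap (integrable_const C) fun p => hC p.1
    _ = C := by rw [integral_const, probReal_univ, one_smul]

theorem noisyRisk_le_noisyRisk_of_totalRisk_sub_le (hk : 2 ≤ k)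
    (hf : ∀ i, Integrable (fun p => ψ (f p.1) i) μ)
    (hfstar : ∀ i, Integrable (fun p => ψ (fstar p.1) i) μ)
    (hC : totalRisk μ ψ fstar - totalRisk μ ψ f ≤ C)
    (hΔ : Δ = cleanRisk μ ψ fstar - cleanRisk μ ψ f)
    (hη0 : 0 ≤ η) (hη : η * (C - k * Δ) ≤ (1 - k) * Δ) :
    noisyRisk μ ψ fstar η ≤ noisyRisk μ ψ f η := by
  have k_sub_one_pos : (0 : ℝ) < k - 1 := sub_pos.2 (Nat.one_lt_cast.2 hk)
  refine sub_nonpos.1 (nonpos_of_mul_nonpos_right ?_ k_sub_one_pos)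
  calc ((k : ℝ) - 1) * (noisyRisk μ ψ fstar η - noisyRisk μ ψ f η)
      = (k - 1 - η * k) * Δ + η * (totalRisk μ ψ fstar - totalRisk μ ψ f) := by
        rw [noisyRisk_eq_cleanRisk_add_totalRisk hf, noisyRisk_eq_cleanRisk_add_totalRisk hfstar,
          hΔ]
        field_simp
        ring
    _ ≤ (k - 1 - η * k) * Δ + η * C := by gcongr
    _ ≤ 0 := by linarith

theorem noise_tolerance_truncCatoniCE_general [IsProbabilityMeasure μ] (hk : 2 ≤ k)
    (hf : ∀ i, Integrable (fun p => ψ (f p.1) i) μ)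
    (hfstar : ∀ i, Integrable (fun p => ψ (fstar p.1) i) μ)
    (hC : ∀ x, ∑ i, (ψ (fstar x) i - ψ (f x) i) ≤ C)
    (hΔ : Δ = cleanRisk μ ψ fstar - cleanRisk μ ψ f)
    (hη0 : 0 ≤ η) (hη : η * (C - k * Δ) ≤ (1 - k) * Δ) :
    noisyRisk μ ψ fstar η ≤ noisyRisk μ ψ f η :=
  noisyRisk_le_noisyRisk_of_totalRisk_sub_le hk hf hfstar (totalRisk_sub_le hf hfstar hC) hΔ hη0 hη

end Risk

/-- noise tolerance of the truncated Catoni's M-estimator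
composed with softmax cross-entropy. With C = k·log(1 + σ + σ²/2),
Δ = R_ψ(f*) − R_ψ(f) ≤ 0, C − kΔ > 0, and symmetric noise rate
0 ≤ η < (1−k)Δ/(C − kΔ), we have R^η_ψ(f*) ≤ R^η_ψ(f). -/
theorem noise_tolerance_truncCatoniCE {X : Type*} [MeasurableSpace X] {k : ℕ}
    (hk : 2 ≤ k) (μ : Measure (X × Fin k)) [IsProbabilityMeasure μ]
    (f fstar : X → Fin k → ℝ) (σ : ℝ) (hσ : 0 < σ)
    (hintf : ∀ i : Fin k,
      Integrable (fun p : X × Fin k => truncCatoniCE σ (f p.1) i) μ)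
    (hintfstar : ∀ i : Fin k,
      Integrable (fun p : X × Fin k => truncCatoniCE σ (fstar p.1) i) μ)
    (C : ℝ) (hC : C = (k : ℝ) * Real.log (1 + σ + σ ^ 2 / 2))
    (Δ : ℝ)
    (hΔdef : Δ = cleanRisk μ (truncCatoniCE σ) fstar - cleanRisk μ (truncCatoniCE σ) f)
    (hΔ : Δ ≤ 0) (hdenom : 0 < C - (k : ℝ) * Δ)
    (η : ℝ) (hη0 : 0 ≤ η) (hη1 : η < ((1 - (k : ℝ)) * Δ) / (C - (k : ℝ) * Δ)) :
    noisyRisk μ (truncCatoniCE σ) fstar η ≤ noisyRisk μ (truncCatoniCE σ) f η :=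
  noise_tolerance_truncCatoniCE_general hk hintf hintfstar
    (fun x => hC ▸ sum_truncCatoniCE_sub_le hσ.le (fstar x) (f x)) hΔdef hη0
    ((lt_div_iff₀ hdenom).1 hη1).le
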